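/- For all f∈H¹(𝕋), g∈L²(𝕋) and h∈L²(𝕋): ∑_{k≠0} ∑_{k₁+k₂=k, |k₁|>10|k|} |k|^{−1}|k₁| |f̂_{k₁}| |ĝ_{k₂}| |ĥ_k| ≤ C‖f‖_{H¹}‖g‖_{L²}‖h‖_{L²}, where C is an absolute constant. -/

import Mathlib

noncomputable section

open Complex MeasureTheory
open scoped BigOperators

/-- A function on the torus `𝕋 = (-π,π)` is represented by its sequence of Fourier
coefficients `f̂ : ℤ → ℂ`. -/
abbrev FSeq := ℤ → ℂ

/-- Membership in the Sobolev space `H^s(𝕋)`: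
`∑_{k∈ℤ} (1+k²)^s |f̂_k|² < ∞`. -/
def InHs (s : ℝ) (a : FSeq) : Prop :=
  Summable fun k : ℤ => (1 + (k : ℝ) ^ 2) ^ s * ‖a k‖ ^ 2

/-- The `H^s(𝕋)` norm: `‖f‖_{H^s}² = 2π ∑_{k∈ℤ} (1+k²)^s |f̂_k|²`. -/
def hnorm (s : ℝ) (a : FSeq) : ℝ :=
  Real.sqrt (2 * Real.pi * ∑' k : ℤ, (1 + (k : ℝ) ^ 2) ^ s * ‖a k‖ ^ 2)

/-!
Two applications of Cauchy–Schwarz. For fixed `k`, Cauchy–Schwarz in `k₁` bounds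
`∑ |k₁|^s |f̂_{k₁}| |ĝ_{k-k₁}|` by `‖f‖_{H^s} ‖g‖_{L²}` uniformly in `k`, since `k₁ ↦ k - k₁`
permutes `ℤ`. A second one, in `k`, bounds `∑ |k|^{-r} |ĥ_k|` by `(∑ |k|^{-2r})^{1/2} ‖h‖_{L²}`,
which is finite as soon as `r > 1/2`. All terms are nonnegative, so the sum may be restricted to any
set of frequencies.
-/

section CauchySchwarz

variable {ι : Type*} {a b : ι → ℝ}

lemma summable_mul_of_summable_sq (ha : Summable fun i => a i ^ 2)
    (hb : Summable fun i => b i ^ 2) : Summable fun i => a i * b i := by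
  refine (ha.add hb).of_norm_bounded fun i => ?_
  rw [Real.norm_eq_abs, abs_le]
  constructor <;> nlinarith [sq_nonneg (a i + b i), sq_nonneg (a i - b i)]

lemma tsum_mul_le_sqrt_mul_sqrt (ha : Summable fun i => a i ^ 2)
    (hb : Summable fun i => b i ^ 2) :
    ∑' i, a i * b i ≤ √(∑' i, a i ^ 2) * √(∑' i, b i ^ 2) := by
  refine (summable_mul_of_summable_sq ha hb).tsum_le_of_sum_le fun s => ?_
  calc ∑ i ∈ s, a i * b i ≤ √(∑ i ∈ s, a i ^ 2) * √(∑ i ∈ s, b i ^ 2) :=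
        Real.sum_mul_le_sqrt_mul_sqrt s a b
    _ ≤ √(∑' i, a i ^ 2) * √(∑' i, b i ^ 2) := by
        gcongr
        · exact ha.sum_le_tsum s fun i _ => sq_nonneg (a i)
        · exact hb.sum_le_tsum s fun i _ => sq_nonneg (b i)

end CauchySchwarz

section DoubleSum

variable {α β : Type*} {F T : α → β → ℝ}

lemma summable_prod_of_nonneg_of_le (hF : ∀ x y, 0 ≤ F x y) (hFT : ∀ x y, F x y ≤ T x y)
    (hT : Summable fun p : α × β => T p.1 p.2) : Summable fun p : α × β => F p.1 p.2 :=
  hT.of_nonneg_of_le (fun p => hF p.1 p.2) fun p => hFT p.1 p.2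

lemma tsum_tsum_le_tsum_tsum_of_nonneg_of_le (hF : ∀ x y, 0 ≤ F x y)
    (hFT : ∀ x y, F x y ≤ T x y) (hT : Summable fun p : α × β => T p.1 p.2) :
    ∑' x, ∑' y, F x y ≤ ∑' x, ∑' y, T x y := by
  have hF' := summable_prod_of_nonneg_of_le hF hFT hT
  rw [← hF'.tsum_prod, ← hT.tsum_prod]
  exact hF'.tsum_le_tsum (fun p => hFT p.1 p.2) hT

end DoubleSum

section Convolution

variable {G : Type*} [AddGroup G] {a b c : G → ℝ}

lemma summable_mul_comp_sub_left (ha : Summable fun y => a y ^ 2) (hb : Summable fun y => b y ^ 2)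
    (x : G) : Summable fun y => a y * b (x - y) :=
  summable_mul_of_summable_sq ha ((Equiv.subLeft x).summable_iff.2 hb)

lemma tsum_mul_comp_sub_left_le (ha : Summable fun y => a y ^ 2) (hb : Summable fun y => b y ^ 2)
    (x : G) : ∑' y, a y * b (x - y) ≤ √(∑' y, a y ^ 2) * √(∑' y, b y ^ 2) := by
  rw [← (Equiv.subLeft x).tsum_eq fun y => b y ^ 2]
  exact tsum_mul_le_sqrt_mul_sqrt ha ((Equiv.subLeft x).summable_iff.2 hb)

lemma summable_mul_tsum_mul_comp_sub_left (ha₀ : ∀ x, 0 ≤ a x) (hb₀ : ∀ x, 0 ≤ b x)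
    (hc₀ : ∀ x, 0 ≤ c x) (ha : Summable fun x => a x ^ 2) (hb : Summable fun x => b x ^ 2)
    (hc : Summable c) : Summable fun x => c x * ∑' y, a y * b (x - y) :=
  (hc.mul_right _).of_nonneg_of_le
    (fun x => mul_nonneg (hc₀ x) (tsum_nonneg fun y => mul_nonneg (ha₀ y) (hb₀ (x - y))))
    fun x => mul_le_mul_of_nonneg_left (tsum_mul_comp_sub_left_le ha hb x) (hc₀ x)

lemma summable_prod_mul_mul_comp_sub (ha₀ : ∀ x, 0 ≤ a x) (hb₀ : ∀ x, 0 ≤ b x)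
    (hc₀ : ∀ x, 0 ≤ c x) (ha : Summable fun x => a x ^ 2) (hb : Summable fun x => b x ^ 2)
    (hc : Summable c) : Summable fun p : G × G => c p.1 * (a p.2 * b (p.1 - p.2)) := by
  refine (summable_prod_of_nonneg fun p =>
    mul_nonneg (hc₀ p.1) (mul_nonneg (ha₀ p.2) (hb₀ (p.1 - p.2)))).2
      ⟨fun x => (summable_mul_comp_sub_left ha hb x).mul_left (c x), ?_⟩
  simpa only [tsum_mul_left] using summable_mul_tsum_mul_comp_sub_left ha₀ hb₀ hc₀ ha hb hc

lemma tsum_tsum_mul_mul_comp_sub_le (ha₀ : ∀ x, 0 ≤ a x) (hb₀ : ∀ x, 0 ≤ b x)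
    (hc₀ : ∀ x, 0 ≤ c x) (ha : Summable fun x => a x ^ 2) (hb : Summable fun x => b x ^ 2)
    (hc : Summable c) :
    ∑' x, ∑' y, c x * (a y * b (x - y)) ≤
      (∑' x, c x) * (√(∑' x, a x ^ 2) * √(∑' x, b x ^ 2)) := by
  simp only [tsum_mul_left]
  rw [← tsum_mul_right]
  exact (summable_mul_tsum_mul_comp_sub_left ha₀ hb₀ hc₀ ha hb hc).tsum_le_tsum
    (fun x => mul_le_mul_of_nonneg_left (tsum_mul_comp_sub_left_le ha hb x) (hc₀ x))
    (hc.mul_right _)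

end Convolution

section Sobolev

variable {r s : ℝ} {f g h : FSeq}

lemma hnorm_nonneg (s : ℝ) (f : FSeq) : 0 ≤ hnorm s f := Real.sqrt_nonneg _

lemma sq_abs_rpow_mul_norm_le (hs : 0 ≤ s) (f : FSeq) (k : ℤ) :
    (|(k : ℝ)| ^ s * ‖f k‖) ^ 2 ≤ (1 + (k : ℝ) ^ 2) ^ s * ‖f k‖ ^ 2 := by
  rw [mul_pow, Real.rpow_pow_comm (abs_nonneg _), sq_abs]
  gcongr
  linarith

lemma InHs.summable_sq_abs_rpow_mul_norm (hs : 0 ≤ s) (hf : InHs s f) :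
    Summable fun k : ℤ => (|(k : ℝ)| ^ s * ‖f k‖) ^ 2 :=
  Summable.of_nonneg_of_le (fun _ => sq_nonneg _) (sq_abs_rpow_mul_norm_le hs f) hf

lemma InHs.sqrt_tsum_sq_abs_rpow_mul_norm_le_hnorm (hs : 0 ≤ s) (hf : InHs s f) :
    √(∑' k : ℤ, (|(k : ℝ)| ^ s * ‖f k‖) ^ 2) ≤ hnorm s f := by
  refine Real.sqrt_le_sqrt ?_
  calc ∑' k : ℤ, (|(k : ℝ)| ^ s * ‖f k‖) ^ 2
      ≤ ∑' k : ℤ, (1 + (k : ℝ) ^ 2) ^ s * ‖f k‖ ^ 2 :=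
        (hf.summable_sq_abs_rpow_mul_norm hs).tsum_le_tsum (sq_abs_rpow_mul_norm_le hs f) hf
    _ ≤ 2 * Real.pi * ∑' k : ℤ, (1 + (k : ℝ) ^ 2) ^ s * ‖f k‖ ^ 2 :=
        le_mul_of_one_le_left (tsum_nonneg fun k => by positivity)
          (by linarith [Real.pi_gt_three])

lemma InHs.summable_sq_norm (hf : InHs 0 f) : Summable fun k => ‖f k‖ ^ 2 := by
  simpa [InHs] using hf

lemma InHs.sqrt_tsum_sq_norm_le_hnorm (hf : InHs 0 f) : √(∑' k, ‖f k‖ ^ 2) ≤ hnorm 0 f := by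
  simpa using hf.sqrt_tsum_sq_abs_rpow_mul_norm_le_hnorm le_rfl

lemma summable_sq_abs_int_rpow_neg (hr : 1 / 2 < r) :
    Summable fun k : ℤ => (|(k : ℝ)| ^ (-r)) ^ 2 := by
  refine (Real.summable_abs_int_rpow (b := r * 2) (by linarith)).congr fun k => ?_
  rw [← Real.rpow_mul_natCast (abs_nonneg _), Nat.cast_ofNat, neg_mul]

lemma tsum_sq_abs_int_rpow_neg_pos (hr : 1 / 2 < r) :
    0 < ∑' k : ℤ, (|(k : ℝ)| ^ (-r)) ^ 2 :=
  (summable_sq_abs_int_rpow_neg hr).tsum_pos (fun _ => sq_nonneg _) 1 (by simp)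

lemma InHs.summable_abs_rpow_neg_mul_norm (hr : 1 / 2 < r) (hh : InHs 0 h) :
    Summable fun k : ℤ => |(k : ℝ)| ^ (-r) * ‖h k‖ :=
  summable_mul_of_summable_sq (summable_sq_abs_int_rpow_neg hr) hh.summable_sq_norm

lemma InHs.tsum_abs_rpow_neg_mul_norm_le (hr : 1 / 2 < r) (hh : InHs 0 h) :
    ∑' k : ℤ, |(k : ℝ)| ^ (-r) * ‖h k‖ ≤
      √(∑' k : ℤ, (|(k : ℝ)| ^ (-r)) ^ 2) * hnorm 0 h :=
  (tsum_mul_le_sqrt_mul_sqrt (summable_sq_abs_int_rpow_neg hr) hh.summable_sq_norm).trans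
    (mul_le_mul_of_nonneg_left hh.sqrt_tsum_sq_norm_le_hnorm (Real.sqrt_nonneg _))

/-- The summand `|k|^{-r} |k₁|^s |f̂_{k₁}| |ĝ_{k₂}| |ĥ_k|` of the trilinear form, with
`k₂ = k - k₁` eliminated. For `r ≠ 0` it is `0` at `k = 0`, because `0 ^ (-r) = 0`. -/
def trilinearTerm (r s : ℝ) (f g h : FSeq) (k k₁ : ℤ) : ℝ :=
  |(k : ℝ)| ^ (-r) * |(k₁ : ℝ)| ^ s * ‖f k₁‖ * ‖g (k - k₁)‖ * ‖h k‖

lemma trilinearTerm_nonneg (r s : ℝ) (f g h : FSeq) (k k₁ : ℤ) :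
    0 ≤ trilinearTerm r s f g h k k₁ := by
  unfold trilinearTerm
  positivity

lemma trilinearTerm_eq_mul_mul (r s : ℝ) (f g h : FSeq) (k k₁ : ℤ) :
    trilinearTerm r s f g h k k₁ =
      (|(k : ℝ)| ^ (-r) * ‖h k‖) * ((|(k₁ : ℝ)| ^ s * ‖f k₁‖) * ‖g (k - k₁)‖) := by
  unfold trilinearTerm
  ring

lemma summable_trilinearTerm (hr : 1 / 2 < r) (hs : 0 ≤ s) (hf : InHs s f) (hg : InHs 0 g)
    (hh : InHs 0 h) : Summable fun p : ℤ × ℤ => trilinearTerm r s f g h p.1 p.2 := by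
  simp only [trilinearTerm_eq_mul_mul]
  exact summable_prod_mul_mul_comp_sub (a := fun k : ℤ => |(k : ℝ)| ^ s * ‖f k‖)
    (b := fun k => ‖g k‖) (c := fun k : ℤ => |(k : ℝ)| ^ (-r) * ‖h k‖)
    (fun _ => by positivity) (fun _ => norm_nonneg _) (fun _ => by positivity)
    (hf.summable_sq_abs_rpow_mul_norm hs) hg.summable_sq_norm
    (hh.summable_abs_rpow_neg_mul_norm hr)

lemma tsum_tsum_trilinearTerm_le (hr : 1 / 2 < r) (hs : 0 ≤ s) (hf : InHs s f) (hg : InHs 0 g)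
    (hh : InHs 0 h) :
    ∑' k, ∑' k₁, trilinearTerm r s f g h k k₁ ≤
      √(∑' k : ℤ, (|(k : ℝ)| ^ (-r)) ^ 2) * hnorm s f * hnorm 0 g * hnorm 0 h := by
  simp only [trilinearTerm_eq_mul_mul]
  calc ∑' k : ℤ, ∑' k₁ : ℤ,
        (|(k : ℝ)| ^ (-r) * ‖h k‖) * ((|(k₁ : ℝ)| ^ s * ‖f k₁‖) * ‖g (k - k₁)‖)
      ≤ (∑' k : ℤ, |(k : ℝ)| ^ (-r) * ‖h k‖) *
          (√(∑' k : ℤ, (|(k : ℝ)| ^ s * ‖f k‖) ^ 2) * √(∑' k, ‖g k‖ ^ 2)) :=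
        tsum_tsum_mul_mul_comp_sub_le (a := fun k : ℤ => |(k : ℝ)| ^ s * ‖f k‖)
          (b := fun k => ‖g k‖) (fun _ => by positivity) (fun _ => norm_nonneg _)
          (fun _ => by positivity) (hf.summable_sq_abs_rpow_mul_norm hs) hg.summable_sq_norm
          (hh.summable_abs_rpow_neg_mul_norm hr)
    _ ≤ (√(∑' k : ℤ, (|(k : ℝ)| ^ (-r)) ^ 2) * hnorm 0 h) * (hnorm s f * hnorm 0 g) := by
        have := hnorm_nonneg s f
        have := hnorm_nonneg 0 h
        gcongr
        · exact hh.tsum_abs_rpow_neg_mul_norm_le hr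
        · exact hf.sqrt_tsum_sq_abs_rpow_mul_norm_le_hnorm hs
        · exact hg.sqrt_tsum_sq_norm_le_hnorm
    _ = _ := by ring

end Sobolev

theorem high_freq_sum_H1_L2_general {r : ℝ} (hr : 1 / 2 < r) :
    ∃ C : ℝ, 0 < C ∧ ∀ s : ℝ, 0 ≤ s → ∀ (R : ℤ → ℤ → Prop) [DecidableRel R] (f g h : FSeq),
      InHs s f → InHs 0 g → InHs 0 h →
      (Summable fun p : ℤ × ℤ =>
        if p.1 ≠ 0 ∧ R p.1 p.2 then trilinearTerm r s f g h p.1 p.2 else 0) ∧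
      ∑' k : ℤ, ∑' k₁ : ℤ, (if k ≠ 0 ∧ R k k₁ then trilinearTerm r s f g h k k₁ else 0)
        ≤ C * hnorm s f * hnorm 0 g * hnorm 0 h := by
  refine ⟨√(∑' k : ℤ, (|(k : ℝ)| ^ (-r)) ^ 2), Real.sqrt_pos.2 (tsum_sq_abs_int_rpow_neg_pos hr),
    fun s hs R _ f g h hf hg hh => ?_⟩
  have hT := summable_trilinearTerm hr hs hf hg hh
  have restricted_nonneg (k k₁ : ℤ) :
      0 ≤ if k ≠ 0 ∧ R k k₁ then trilinearTerm r s f g h k k₁ else 0 :=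
    ite_nonneg (trilinearTerm_nonneg r s f g h k k₁) le_rfl
  have restricted_le (k k₁ : ℤ) :
      (if k ≠ 0 ∧ R k k₁ then trilinearTerm r s f g h k k₁ else 0) ≤
        trilinearTerm r s f g h k k₁ := by
    split_ifs
    exacts [le_rfl, trilinearTerm_nonneg r s f g h k k₁]
  exact ⟨summable_prod_of_nonneg_of_le restricted_nonneg restricted_le hT,
    (tsum_tsum_le_tsum_tsum_of_nonneg_of_le restricted_nonneg restricted_le hT).trans
      (tsum_tsum_trilinearTerm_le hr hs hf hg hh)⟩

theorem high_freq_sum_H1_L2 :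
    ∃ C : ℝ, 0 < C ∧ ∀ f g h : FSeq, InHs 1 f → InHs 0 g → InHs 0 h →
      ∑' k : ℤ, ∑' k₁ : ℤ,
        (if k ≠ 0 ∧ 10 * |k| < |k₁| then
          (|(k : ℝ)|)⁻¹ * |(k₁ : ℝ)| * ‖f k₁‖ * ‖g (k - k₁)‖ * ‖h k‖ else 0)
      ≤ C * hnorm 1 f * hnorm 0 g * hnorm 0 h := by
  obtain ⟨C, hC, hbound⟩ := high_freq_sum_H1_L2_general one_half_lt_one
  exact ⟨C, hC, fun f g h hf hg hh => by
    simpa only [trilinearTerm, Real.rpow_neg_one, Real.rpow_one] using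
      (hbound 1 zero_le_one (fun k k₁ => 10 * |k| < |k₁|) f g h hf hg hh).2⟩

end
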